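/- arXiv:2202.00467 — 2 statements merged into one kernel-verified Lean document; each statement's English description precedes it below -/
import Mathlib

section
/- Safe screening rule for cardinality-constrained logistic regression (Proposition 2). Suppose (x*, t*, z*) is an optimal solution attaining η_CC, let α and δ be defined from x*, and let η̄_C be any real number with η_C ≤ η̄_C. Then every optimal solution (x̂, ẑ) of the cardinality-constrained mixed-integer problem attaining η_C satisfies: ẑ_j = 0 for every index j with δ_j ≤ δ_{[k+1]} and η_CC − γ(δ_j − δ_{[k]}) > η̄_C, and ẑ_j = 1 for every index j with δ_j ≥ δ_{[k]} and η_CC + γ(δ_j − δ_{[k+1]}) > η̄_C. -/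
/-- The logistic loss `L(x) = (1/m) ∑ᵢ log (1 + exp (-yᵢ (A x)ᵢ))`. -/
noncomputable def logLoss (m n : ℕ) (A : Fin m → Fin n → ℝ) (y : Fin m → ℝ)
    (x : Fin n → ℝ) : ℝ :=
  (1 / (m : ℝ)) * ∑ i, Real.log (1 + Real.exp (-(y i) * ∑ j, A i j * x j))


lemma logistic_tangent (u v : ℝ) :
    Real.log (1 + Real.exp (-v)) - (u - v) / (1 + Real.exp v) ≤ Real.log (1 + Real.exp (-u)) := by
  have hv : 0 < Real.exp v := Real.exp_pos v
  have h1 : 0 < 1 + Real.exp v := by positivity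
  have hc := convexOn_exp.2 (Set.mem_univ (0:ℝ)) (Set.mem_univ (v - u))
    (show 0 ≤ Real.exp v / (1 + Real.exp v) by positivity)
    (show 0 ≤ 1 / (1 + Real.exp v) by positivity) (by field_simp; ring)
  simp only [smul_eq_mul, mul_zero, zero_add, Real.exp_zero, mul_one] at hc
  have hpos : 0 < 1 + Real.exp (-v) := by positivity
  have key : Real.exp (1 / (1 + Real.exp v) * (v - u)) * (1 + Real.exp (-v)) ≤ 1 + Real.exp (-u) := by
    refine (mul_le_mul_of_nonneg_right hc hpos.le).trans (le_of_eq ?_)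
    rw [Real.exp_sub, Real.exp_neg, Real.exp_neg]
    have := (Real.exp_pos u).ne'
    field_simp
    ring
  have h2 := Real.log_le_log (by positivity) key
  rw [Real.log_mul (Real.exp_pos _).ne' hpos.ne', Real.log_exp] at h2
  have h3 : 1 / (1 + Real.exp v) * (v - u) = - ((u - v) / (1 + Real.exp v)) := by ring
  linarith

lemma logistic_hasDeriv (a d : ℝ) :
    HasDerivAt (fun e : ℝ => Real.log (1 + Real.exp (-(a + e * d)))) (-(d / (1 + Real.exp a))) 0 := by
  have h0 : HasDerivAt (fun e : ℝ => -(a + e * d)) (-d) 0 := by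
    have h := (((hasDerivAt_id (0:ℝ)).mul_const d).const_add a).fun_neg
    rw [one_mul] at h
    exact h
  have h1 := (h0.exp.const_add 1).log (by positivity)
  convert h1 using 1
  simp only [zero_mul, add_zero, Real.exp_neg]
  have := (Real.exp_pos a)
  field_simp
  ring

lemma min_deriv_nonneg (f : ℝ → ℝ) (f' : ℝ) (h : HasDerivAt f f' 0)
    (hmin : ∀ e, 0 < e → e ≤ 1 → f 0 ≤ f e) : 0 ≤ f' := by
  have h2 : Filter.Tendsto (slope f 0) (nhdsWithin 0 (Set.Ioi 0)) (nhds f') :=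
    (hasDerivAt_iff_tendsto_slope.1 h).mono_left
      (nhdsWithin_mono _ (fun x hx => ne_of_gt hx))
  refine ge_of_tendsto h2 ?_
  filter_upwards [Ioc_mem_nhdsGT (zero_lt_one (α := ℝ))] with e he
  rw [slope_def_field]
  have := hmin e he.1 he.2
  apply div_nonneg <;> linarith [he.1]

lemma cone_convex (x1 z1 t1 x2 z2 t2 e : ℝ) (he0 : 0 ≤ e) (he1 : e ≤ 1)
    (hz1 : 0 ≤ z1) (ht1 : 0 ≤ t1) (hz2 : 0 ≤ z2) (ht2 : 0 ≤ t2)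
    (h1 : x1 ^ 2 ≤ z1 * t1) (h2 : x2 ^ 2 ≤ z2 * t2) :
    (x1 + e * (x2 - x1)) ^ 2 ≤ (z1 + e * (z2 - z1)) * (t1 + e * (t2 - t1)) := by
  have hx : 2 * (x1 * x2) ≤ z1 * t2 + z2 * t1 := by
    refine abs_le_of_sq_le_sq ?_ (by positivity) |> fun h => (le_abs_self _).trans h
    have : (x1 * x2) ^ 2 ≤ (z1 * t1) * (z2 * t2) := by
      rw [mul_pow]; exact mul_le_mul h1 h2 (by positivity) (by positivity)
    nlinarith [sq_nonneg (z1 * t2 - z2 * t1)]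
  have a1 := mul_le_mul_of_nonneg_left h1 (sq_nonneg (1 - e))
  have a2 := mul_le_mul_of_nonneg_left h2 (sq_nonneg e)
  have a3 := mul_le_mul_of_nonneg_left hx (mul_nonneg he0 (sub_nonneg.2 he1))
  nlinarith

lemma lin_swap (m n : ℕ) (A : Fin m → Fin n → ℝ) (α : Fin m → ℝ) (d : Fin n → ℝ) :
    ∑ j, (∑ i, α i * A i j) * d j = ∑ i, α i * ∑ j, A i j * d j := by
  simp only [Finset.sum_mul, Finset.mul_sum]
  rw [Finset.sum_comm]
  simp only [mul_assoc]

lemma logLoss_tangent (m n : ℕ) (A : Fin m → Fin n → ℝ) (y : Fin m → ℝ)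
    (xs x : Fin n → ℝ) (α : Fin m → ℝ)
    (hα : ∀ i, α i = y i / ((m : ℝ) * (1 + Real.exp (y i * ∑ j, A i j * xs j)))) :
    logLoss m n A y xs - ∑ j, (∑ i, α i * A i j) * (x j - xs j) ≤ logLoss m n A y x := by
  rw [lin_swap]
  unfold logLoss
  simp only [Finset.mul_sum (a := (1 / (m:ℝ)))]
  rw [← Finset.sum_sub_distrib]
  refine Finset.sum_le_sum fun i _ => ?_
  have h := mul_le_mul_of_nonneg_left
    (logistic_tangent (y i * ∑ j, A i j * x j) (y i * ∑ j, A i j * xs j))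
    (show (0:ℝ) ≤ 1 / m by positivity)
  simp only [neg_mul]
  refine le_trans (le_of_eq ?_) h
  rw [hα]
  simp only [mul_sub, Finset.sum_sub_distrib]
  field_simp

lemma logLoss_hasDeriv (m n : ℕ) (A : Fin m → Fin n → ℝ) (y : Fin m → ℝ)
    (xs d : Fin n → ℝ) (α : Fin m → ℝ)
    (hα : ∀ i, α i = y i / ((m : ℝ) * (1 + Real.exp (y i * ∑ j, A i j * xs j)))) :
    HasDerivAt (fun e : ℝ => logLoss m n A y (fun j => xs j + e * d j))
      (-∑ j, (∑ i, α i * A i j) * d j) 0 := by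
  rw [lin_swap]
  have h := (HasDerivAt.fun_sum (u := Finset.univ) (fun i _ => logistic_hasDeriv
    (y i * ∑ j, A i j * xs j) (y i * ∑ j, A i j * d j))).const_mul (1 / (m:ℝ))
  refine (h.congr_deriv ?_).congr_of_eventuallyEq (Filter.Eventually.of_forall ?_)
  rotate_left
  · intro e
    dsimp only
    unfold logLoss
    congr 1
    refine Finset.sum_congr rfl fun i _ => ?_
    congr 3
    simp only [mul_add, Finset.sum_add_distrib, Finset.mul_sum, neg_mul, Finset.sum_neg_distrib]
    rw [neg_add]
    congr 2
    refine Finset.sum_congr rfl fun j _ => ?_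
    ring
  · rw [Finset.mul_sum, ← Finset.sum_neg_distrib]
    refine Finset.sum_congr rfl fun i _ => ?_
    rw [hα]
    field_simp

/-- Safe screening rule for cardinality-constrained logistic regression (Proposition 2).
`(xs, ts, zs)` is an optimal solution of the conic relaxation attaining `ηCC`;
`α` and `δ` are defined from `xs`; the permutation `σ` sorts `δ` in nonincreasing
order, so `δ (σ ⟨k-1,_⟩)` is the k-th largest entry `δ_[k]` and `δ (σ ⟨k,_⟩)` is
`δ_[k+1]`; `ηC` is the optimal value (infimum) of the cardinality-constrained
mixed-integer problem and `ηbar` is an upper bound on `ηC`.  Then every optimal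
solution `(xh, zh)` of the mixed-integer problem attaining `ηC` satisfies
`zh j = 0` whenever `δ_j ≤ δ_[k+1]` and `ηCC - γ (δ_j - δ_[k]) > ηbar`, and
`zh j = 1` whenever `δ_j ≥ δ_[k]` and `ηCC + γ (δ_j - δ_[k+1]) > ηbar`. -/
theorem safe_screening_CARD
    (m n : ℕ) (hm : 0 < m) (hn : 0 < n)
    (A : Fin m → Fin n → ℝ) (y : Fin m → ℝ) (hy : ∀ i, y i = 1 ∨ y i = -1)
    (γ : ℝ) (hγ : 0 < γ)
    (k : ℕ) (hk : 1 ≤ k) (hkn : k < n)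
    -- (xs, ts, zs) is an optimal solution of the conic relaxation
    (xs ts zs : Fin n → ℝ)
    (hts : ∀ j, 0 ≤ ts j) (hzs : ∀ j, 0 ≤ zs j ∧ zs j ≤ 1)
    (hcard_s : ∑ j, zs j ≤ (k : ℝ))
    (hcone_s : ∀ j, (xs j) ^ 2 ≤ zs j * ts j)
    (hopt : ∀ x t z : Fin n → ℝ, (∀ j, 0 ≤ t j) → (∀ j, 0 ≤ z j ∧ z j ≤ 1) →
      (∑ j, z j ≤ (k : ℝ)) → (∀ j, (x j) ^ 2 ≤ z j * t j) →
      logLoss m n A y xs + (1 / γ) * ∑ j, ts j ≤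
        logLoss m n A y x + (1 / γ) * ∑ j, t j)
    (ηCC : ℝ)
    (hηCC : ηCC = logLoss m n A y xs + (1 / γ) * ∑ j, ts j)
    -- dual quantities defined from xs
    (α : Fin m → ℝ)
    (hα : ∀ i, α i = y i / ((m : ℝ) * (1 + Real.exp (y i * ∑ j, A i j * xs j))))
    (δ : Fin n → ℝ)
    (hδ : ∀ j, δ j = (1 / 4) * (∑ i, α i * A i j) ^ 2)
    -- σ sorts δ in nonincreasing order
    (σ : Equiv.Perm (Fin n)) (hσ : ∀ i j : Fin n, i ≤ j → δ (σ j) ≤ δ (σ i))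
    -- ηC is the optimal value (infimum) of the mixed-integer problem
    (ηC : ℝ)
    (hηC : ηC = sInf {v : ℝ | ∃ x z : Fin n → ℝ, (∀ j, z j = 0 ∨ z j = 1) ∧
      (∑ j, z j ≤ (k : ℝ)) ∧ (∀ j, z j = 0 → x j = 0) ∧
      v = logLoss m n A y x + (1 / γ) * ∑ j, (x j) ^ 2})
    (ηbar : ℝ) (hub : ηC ≤ ηbar)
    -- (xh, zh) is an optimal solution of the mixed-integer problem attaining ηC
    (xh zh : Fin n → ℝ)
    (hzh : ∀ j, zh j = 0 ∨ zh j = 1)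
    (hcard : ∑ j, zh j ≤ (k : ℝ))
    (hxz : ∀ j, zh j = 0 → xh j = 0)
    (hatt : logLoss m n A y xh + (1 / γ) * ∑ j, (xh j) ^ 2 = ηC) :
    ∀ j, (δ j ≤ δ (σ ⟨k, hkn⟩) →
            ηCC - γ * (δ j - δ (σ ⟨k - 1, by omega⟩)) > ηbar → zh j = 0) ∧
         (δ (σ ⟨k - 1, by omega⟩) ≤ δ j →
            ηCC + γ * (δ j - δ (σ ⟨k, hkn⟩)) > ηbar → zh j = 1) := by
  set a := δ (σ ⟨k - 1, by omega⟩) with ha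
  set b := δ (σ ⟨k, hkn⟩) with hb
  set g : Fin n → ℝ := fun j => ∑ i, α i * A i j with hg
  have hδg : ∀ j, δ j = (1 / 4) * g j ^ 2 := hδ
  have hδ0 : ∀ j, 0 ≤ δ j := fun j => by rw [hδg]; positivity
  have hba : b ≤ a := hσ _ _ (by simp [Fin.le_def])
  set w : Fin n → ℝ := fun i => if (σ.symm i).val < k then 1 else 0 with hw
  have hw01 : ∀ i, (w i = 1 ∧ a ≤ δ i) ∨ (w i = 0 ∧ δ i ≤ b) := by
    intro i
    by_cases h : (σ.symm i).val < k
    · left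
      refine ⟨by simp [hw, h], ?_⟩
      have := hσ (σ.symm i) ⟨k - 1, by omega⟩ (by rw [Fin.le_def]; simp only; omega)
      simpa using this
    · right
      refine ⟨by simp [hw, h], ?_⟩
      have := hσ ⟨k, hkn⟩ (σ.symm i) (by rw [Fin.le_def]; simp only; omega)
      simpa using this
  have hwsum : ∑ i, w i = k := by
    rw [← Equiv.sum_comp σ]
    simp only [hw, Equiv.symm_apply_apply]
    rw [Finset.sum_boole]
    norm_cast
    rw [Fin.card_filter_val_lt]
    omega
  -- strong duality direction
  have hdual : ηCC ≤ logLoss m n A y xs + ∑ j, g j * xs j - γ * ∑ j, w j * δ j := by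
    set X : Fin n → ℝ := fun j => γ * g j / 2 * w j with hX
    set T : Fin n → ℝ := fun j => γ ^ 2 * δ j * w j with hT
    have hw0 : ∀ i, 0 ≤ w i ∧ w i ≤ 1 := fun i => by
      rcases hw01 i with h | h <;> rw [h.1] <;> norm_num
    have hT0 : ∀ j, 0 ≤ T j := fun j =>
      mul_nonneg (mul_nonneg (sq_nonneg _) (hδ0 j)) (hw0 j).1
    have hcone : ∀ j, X j ^ 2 ≤ w j * T j := fun j => by
      simp only [hX, hT, hδg]
      apply le_of_eq; ring
    have hD := (logLoss_hasDeriv m n A y xs (fun j => X j - xs j) α hα).add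
      ((((hasDerivAt_id (0:ℝ)).mul_const (∑ j, (T j - ts j))).const_add (∑ j, ts j)).const_mul (1 / γ))
    have h0 := min_deriv_nonneg _ _ hD (by
      intro e he0 he1
      have := hopt (fun j => xs j + e * (X j - xs j)) (fun j => ts j + e * (T j - ts j))
        (fun j => zs j + e * (w j - zs j))
        (fun j => by nlinarith [hT0 j, hts j])
        (fun j => ⟨by nlinarith [(hw0 j).1, (hzs j).1], by nlinarith [(hw0 j).2, (hzs j).2]⟩)
        (by
          rw [Finset.sum_add_distrib, ← Finset.mul_sum, Finset.sum_sub_distrib, hwsum]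
          nlinarith)
        (fun j => cone_convex _ _ _ _ _ _ e he0.le he1 (hzs j).1 (hts j) (hw0 j).1 (hT0 j)
          (hcone_s j) (hcone j))
      rw [Finset.sum_add_distrib, ← Finset.mul_sum] at this
      simpa only [Pi.add_apply, id, zero_mul, add_zero] using this)
    have e1 : ∑ j, (∑ i, α i * A i j) * (X j - xs j)
        = 2 * γ * ∑ j, w j * δ j - ∑ j, g j * xs j := by
      rw [Finset.mul_sum, ← Finset.sum_sub_distrib]
      refine Finset.sum_congr rfl fun j _ => ?_
      rw [hδg]; simp only [hX]
      change g j * _ = _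
      ring
    have e2 : 1 / γ * ∑ j, (T j - ts j) = γ * ∑ j, w j * δ j - 1 / γ * ∑ j, ts j := by
      rw [Finset.sum_sub_distrib, mul_sub]
      congr 1
      rw [Finset.mul_sum, Finset.mul_sum]
      refine Finset.sum_congr rfl fun j _ => ?_
      simp only [hT]
      field_simp
    rw [e1, one_mul, e2] at h0
    linarith
  -- weak duality for xh
  have hweak : logLoss m n A y xs + ∑ j, g j * xs j - γ * ∑ j, zh j * δ j ≤ ηC := by
    have h1 := logLoss_tangent m n A y xs xh α hα
    have h2 : ∑ j, g j * xh j - γ * ∑ j, zh j * δ j ≤ 1 / γ * ∑ j, xh j ^ 2 := by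
      rw [Finset.mul_sum, Finset.mul_sum, ← Finset.sum_sub_distrib]
      refine Finset.sum_le_sum fun j _ => ?_
      rcases hzh j with h | h
      · rw [hxz j h, h]; simp
      · rw [h, hδg]
        have : 1 / γ * xh j ^ 2 - (g j * xh j - γ * (1 * (1 / 4 * g j ^ 2)))
            = 1 / γ * (xh j - γ * g j / 2) ^ 2 := by field_simp; ring
        have h3 : 0 ≤ 1 / γ * (xh j - γ * g j / 2) ^ 2 := by positivity
        linarith
    have h4 : ∑ j, (∑ i, α i * A i j) * (xh j - xs j) = ∑ j, g j * xh j - ∑ j, g j * xs j := by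
      rw [← Finset.sum_sub_distrib]
      exact Finset.sum_congr rfl fun j _ => mul_sub _ _ _
    linarith
  have expand : ∀ (v : Fin n → ℝ) (c : ℝ), ∑ i, v i * (δ i - c) = ∑ i, v i * δ i - c * ∑ i, v i := by
    intro v c
    rw [Finset.mul_sum, ← Finset.sum_sub_distrib]
    exact Finset.sum_congr rfl fun j _ => by ring
  have ha0 : 0 ≤ a := hδ0 _
  have hb0 : 0 ≤ b := hδ0 _
  intro j
  constructor
  · intro _ hgt
    rcases hzh j with h | h
    · exact h
    exfalso
    have hs : ∑ i, zh i * (δ i - a) ≤ ∑ i, (w i * (δ i - a) + if i = j then δ j - a else 0) := by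
      refine Finset.sum_le_sum fun i _ => ?_
      by_cases hij : i = j
      · subst hij
        rw [h, if_pos rfl]
        rcases hw01 i with ⟨h1, h2⟩ | ⟨h1, h2⟩ <;> rw [h1] <;> linarith
      · rw [if_neg hij]
        rcases hw01 i with ⟨h1, h2⟩ | ⟨h1, h2⟩ <;> rcases hzh i with h3 | h3 <;> rw [h1, h3] <;> linarith
    rw [Finset.sum_add_distrib, Finset.sum_ite_eq' , if_pos (Finset.mem_univ j), expand, expand, hwsum] at hs
    have := mul_le_mul_of_nonneg_left hcard ha0
    have h5 : ∑ i, zh i * δ i ≤ ∑ i, w i * δ i + (δ j - a) := by linarith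
    have := mul_le_mul_of_nonneg_left h5 hγ.le
    linarith
  · intro _ hgt
    rcases hzh j with h | h
    swap
    · exact h
    exfalso
    have hs : ∑ i, zh i * (δ i - b) ≤ ∑ i, (w i * (δ i - b) - if i = j then δ j - b else 0) := by
      refine Finset.sum_le_sum fun i _ => ?_
      by_cases hij : i = j
      · subst hij
        rw [h, if_pos rfl]
        rcases hw01 i with ⟨h1, h2⟩ | ⟨h1, h2⟩ <;> rw [h1] <;> linarith
      · rw [if_neg hij]
        rcases hw01 i with ⟨h1, h2⟩ | ⟨h1, h2⟩ <;> rcases hzh i with h3 | h3 <;> rw [h1, h3] <;> linarith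
    rw [Finset.sum_sub_distrib, Finset.sum_ite_eq' , if_pos (Finset.mem_univ j), expand, expand, hwsum] at hs
    have := mul_le_mul_of_nonneg_left hcard hb0
    have h5 : ∑ i, zh i * δ i ≤ ∑ i, w i * δ i - (δ j - b) := by linarith
    have := mul_le_mul_of_nonneg_left h5 hγ.le
    linarith
end

section
/- Strong Fenchel duality for the regularized conic relaxation: suppose (x*, t*, z*) is an optimal solution attaining η_CR, let α be defined from x*, and set p*_j = γ Σ_{i=1}^m α_i A_{ij} for j = 1,…,n. Then the infimum over x ∈ ℝ^n and z ∈ [0,1]^n of L(x) + Σ_{j=1}^n ( μ z_j + p*_j x_j / γ − (p*_j)² z_j / (4γ) ) equals η_CR; in particular the Fenchel dual value sup_{p ∈ ℝ^n} inf_{x ∈ ℝ^n, z ∈ [0,1]^n} [ L(x) + Σ_{j=1}^n ( μ z_j + p_j x_j / γ − p_j² z_j / (4γ) ) ] equals η_CR (there is no duality gap). -/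
theorem aux_softplus (u u0 : ℝ) :
    Real.log (1 + Real.exp u0) + (u - u0) * (1 / (1 + Real.exp (-u0))) ≤
      Real.log (1 + Real.exp u) := by
  have h0 := Real.exp_pos u0
  have hu := Real.exp_pos u
  have hn0 := Real.exp_pos (-u0)
  have hmul : Real.exp u0 * Real.exp (-u0) = 1 := by rw [← Real.exp_add]; simp
  set q := 1 / (1 + Real.exp (-u0)) with hq
  have hq0 : 0 ≤ q := by positivity
  have hq1 : 0 ≤ 1 - q := by
    rw [hq, sub_nonneg, div_le_one (by positivity)]; linarith
  have hc := convexOn_exp.2 (Set.mem_univ (0 : ℝ)) (Set.mem_univ (u - u0)) hq1 hq0 (by ring)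
  simp only [smul_eq_mul, mul_zero, zero_add, Real.exp_zero, mul_one] at hc
  have hqe : q = Real.exp u0 / (1 + Real.exp u0) := by
    rw [hq, div_eq_div_iff (by positivity) (by positivity)]
    linarith
  have hrhs : 1 - q + q * Real.exp (u - u0) = (1 + Real.exp u) / (1 + Real.exp u0) := by
    rw [hqe, Real.exp_sub]; field_simp; ring
  rw [hrhs, le_div_iff₀ (by positivity)] at hc
  rw [Real.le_log_iff_exp_le (by positivity), Real.exp_add, Real.exp_log (by positivity),
    mul_comm (u - u0)]
  linarith

theorem aux_deriv_nonneg (h : ℝ → ℝ) (h' : ℝ) (hd : HasDerivAt h h' 0)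
    (hmin : ∀ l, 0 ≤ l → l ≤ 1 → h 0 ≤ h l) : 0 ≤ h' := by
  have ht := hd.tendsto_slope_zero_right
  refine ge_of_tendsto ht ?_
  have : Set.Ioo (0 : ℝ) 1 ∈ nhdsWithin (0 : ℝ) (Set.Ioi 0) :=
    Ioo_mem_nhdsGT one_pos
  filter_upwards [this] with l hl
  have h1 := hmin l hl.1.le hl.2.le
  have := hl.1
  simp only [zero_add, smul_eq_mul]
  exact mul_nonneg (by positivity) (by linarith)

theorem aux_loss_deriv (m n : ℕ) (A : Fin m → Fin n → ℝ) (y : Fin m → ℝ)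
    (xs d : Fin n → ℝ) (α : Fin m → ℝ)
    (hα : ∀ i, α i = y i / ((m : ℝ) * (1 + Real.exp (y i * ∑ j, A i j * xs j)))) :
    HasDerivAt (fun l : ℝ => logLoss m n A y (fun j => xs j + l * d j))
      (-∑ i, α i * ∑ j, A i j * d j) 0 := by
  have hlin : ∀ i (l : ℝ), ∑ j, A i j * (xs j + l * d j) =
      ∑ j, A i j * xs j + l * ∑ j, A i j * d j := by
    intro i l
    rw [Finset.mul_sum, ← Finset.sum_add_distrib]
    exact Finset.sum_congr rfl fun j _ => by ring
  unfold logLoss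
  simp only [hlin]
  have key : ∀ i, HasDerivAt (fun l : ℝ => Real.log (1 + Real.exp (-(y i) *
      (∑ j, A i j * xs j + l * ∑ j, A i j * d j))))
      (-(y i / (1 + Real.exp (y i * ∑ j, A i j * xs j))) * ∑ j, A i j * d j) 0 := by
    intro i
    set a := ∑ j, A i j * xs j
    set b := ∑ j, A i j * d j
    have h1 : HasDerivAt (fun l : ℝ => -(y i) * (a + l * b)) (-(y i) * (1 * b)) 0 :=
      (((hasDerivAt_id (0 : ℝ)).mul_const b).const_add a).const_mul _
    have h2 := (h1.exp.const_add 1).log (by positivity)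
    convert h2 using 1
    have e : Real.exp (-(y i) * (a + 0 * b)) = (Real.exp (y i * a))⁻¹ := by
      rw [← Real.exp_neg]; congr 1; ring
    rw [e]
    have := Real.exp_pos (y i * a)
    field_simp
    ring
  have h3 := (HasDerivAt.fun_sum (u := Finset.univ) fun i _ => key i).const_mul (1 / (m : ℝ))
  refine h3.congr_deriv ?_
  symm
  rw [Finset.mul_sum, ← Finset.sum_neg_distrib]
  refine Finset.sum_congr rfl fun i _ => ?_
  rw [hα, div_mul_eq_div_div, div_right_comm]
  ring

theorem aux_loss_grad (m n : ℕ) (A : Fin m → Fin n → ℝ) (y : Fin m → ℝ)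
    (xs x : Fin n → ℝ) (α : Fin m → ℝ)
    (hα : ∀ i, α i = y i / ((m : ℝ) * (1 + Real.exp (y i * ∑ j, A i j * xs j)))) :
    logLoss m n A y xs - ∑ i, α i * ∑ j, A i j * (x j - xs j) ≤ logLoss m n A y x := by
  have hsub : ∀ i, ∑ j, A i j * (x j - xs j) = ∑ j, A i j * x j - ∑ j, A i j * xs j := by
    intro i
    rw [← Finset.sum_sub_distrib]
    exact Finset.sum_congr rfl fun j _ => by ring
  unfold logLoss
  rw [Finset.mul_sum, Finset.mul_sum, ← Finset.sum_sub_distrib]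
  refine Finset.sum_le_sum fun i _ => ?_
  rw [hsub, hα]
  set a := ∑ j, A i j * xs j
  set b := ∑ j, A i j * x j
  have h := aux_softplus (-(y i) * b) (-(y i) * a)
  rw [show -(-(y i) * a) = y i * a by ring] at h
  have h2 := mul_le_mul_of_nonneg_left h (show (0 : ℝ) ≤ 1 / m by positivity)
  refine le_trans (le_of_eq ?_) h2
  rw [div_mul_eq_div_div, div_right_comm]
  ring

/-- Strong Fenchel duality for the regularized conic relaxation: if `(xs, ts, zs)` is an
optimal solution of the conic relaxation attaining `ηCR`, `α` is defined from `xs` and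
`pstar j = γ ∑ᵢ αᵢ A_{ij}`, then the Fenchel dual function `D` (infimum in the extended
reals) satisfies `D pstar = ηCR`, and the dual value `sup_p D p` equals `ηCR`
(no duality gap). -/
theorem strong_fenchel_duality_REG
    (m n : ℕ) (hm : 0 < m) (hn : 0 < n)
    (A : Fin m → Fin n → ℝ) (y : Fin m → ℝ) (hy : ∀ i, y i = 1 ∨ y i = -1)
    (γ μ : ℝ) (hγ : 0 < γ) (hμ : 0 < μ)
    -- (xs, ts, zs) is an optimal solution of the conic relaxation attaining ηCR
    (xs ts zs : Fin n → ℝ)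
    (hts : ∀ j, 0 ≤ ts j) (hzs : ∀ j, 0 ≤ zs j ∧ zs j ≤ 1)
    (hcone_s : ∀ j, (xs j) ^ 2 ≤ zs j * ts j)
    (hopt : ∀ x t z : Fin n → ℝ, (∀ j, 0 ≤ t j) → (∀ j, 0 ≤ z j ∧ z j ≤ 1) →
      (∀ j, (x j) ^ 2 ≤ z j * t j) →
      logLoss m n A y xs + (1 / γ) * ∑ j, ts j + μ * ∑ j, zs j ≤
        logLoss m n A y x + (1 / γ) * ∑ j, t j + μ * ∑ j, z j)
    (ηCR : ℝ)
    (hηCR : ηCR = logLoss m n A y xs + (1 / γ) * ∑ j, ts j + μ * ∑ j, zs j)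
    -- dual quantities defined from xs
    (α : Fin m → ℝ)
    (hα : ∀ i, α i = y i / ((m : ℝ) * (1 + Real.exp (y i * ∑ j, A i j * xs j))))
    (pstar : Fin n → ℝ)
    (hpstar : ∀ j, pstar j = γ * ∑ i, α i * A i j)
    -- D is the Fenchel dual function
    (D : (Fin n → ℝ) → EReal)
    (hD : ∀ p, D p = sInf {v : EReal | ∃ x z : Fin n → ℝ,
      (∀ j, 0 ≤ z j ∧ z j ≤ 1) ∧
      v = ((logLoss m n A y x +
        ∑ j, (μ * z j + p j * x j / γ - (p j) ^ 2 * z j / (4 * γ)) : ℝ) : EReal)}) :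
    D pstar = (ηCR : EReal) ∧
    sSup {w : EReal | ∃ p : Fin n → ℝ, w = D p} = (ηCR : EReal) := by
  have hsw : ∀ d : Fin n → ℝ, ∑ i, α i * ∑ j, A i j * d j = ∑ j, pstar j * d j / γ := by
    intro d
    simp only [Finset.mul_sum]
    rw [Finset.sum_comm]
    refine Finset.sum_congr rfl fun j _ => ?_
    rw [hpstar, mul_assoc, mul_div_cancel_left₀ _ hγ.ne', Finset.sum_mul]
    exact Finset.sum_congr rfl fun i _ => by ring
  -- weak duality
  have hweak : ∀ p, D p ≤ (ηCR : EReal) := by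
    intro p
    rw [hD]
    refine le_trans (sInf_le ⟨xs, zs, hzs, rfl⟩) ?_
    rw [EReal.coe_le_coe_iff, hηCR, add_assoc, Finset.mul_sum, Finset.mul_sum,
      ← Finset.sum_add_distrib]
    refine add_le_add le_rfl (Finset.sum_le_sum fun j _ => ?_)
    have hkey : p j * xs j ≤ ts j + p j ^ 2 * zs j / 4 := by
      have h0 : 0 ≤ ts j + p j ^ 2 * zs j / 4 := by
        have := hts j
        have := (hzs j).1
        positivity
      refine abs_le_of_sq_le_sq' ?_ h0 |>.2
      have h1 := mul_le_mul_of_nonneg_left (hcone_s j) (sq_nonneg (p j))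
      nlinarith [sq_nonneg (ts j - p j ^ 2 * zs j / 4)]
    have h2 := mul_le_mul_of_nonneg_left hkey (show (0 : ℝ) ≤ 1 / γ by positivity)
    have e1 : p j * xs j / γ = 1 / γ * (p j * xs j) := by ring
    have e2 : p j ^ 2 * zs j / (4 * γ) = 1 / γ * (p j ^ 2 * zs j / 4) := by
      field_simp
    rw [e1, e2]
    linarith
  -- strong duality at pstar
  have hstrong : (ηCR : EReal) ≤ D pstar := by
    rw [hD]
    refine le_sInf ?_
    rintro v ⟨x, z, hz, rfl⟩
    rw [EReal.coe_le_coe_iff, hηCR]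
    have hg := aux_loss_grad m n A y xs x α hα
    rw [hsw] at hg
    have hder := aux_loss_deriv m n A y xs (fun j => pstar j * z j / 2 - xs j) α hα
    rw [hsw] at hder
    have hc : HasDerivAt (fun l : ℝ =>
        l * ∑ j, ((1 / γ) * (pstar j ^ 2 * z j / 4 - ts j) + μ * (z j - zs j)))
        (1 * ∑ j, ((1 / γ) * (pstar j ^ 2 * z j / 4 - ts j) + μ * (z j - zs j))) 0 :=
      (hasDerivAt_id (0 : ℝ)).mul_const _
    have hnn := aux_deriv_nonneg _ _ (hder.fun_add hc) (by
      intro l hl0 hl1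
      have ho := hopt (fun j => xs j + l * (pstar j * z j / 2 - xs j))
        (fun j => ts j + l * (pstar j ^ 2 * z j / 4 - ts j))
        (fun j => zs j + l * (z j - zs j))
        (fun j => by
          have h1 := hts j
          have h2 : 0 ≤ pstar j ^ 2 * z j / 4 := by
            have := (hz j).1
            positivity
          nlinarith [mul_nonneg hl0 h2, mul_nonneg (sub_nonneg.2 hl1) h1])
        (fun j => by
          obtain ⟨a1, a2⟩ := hz j
          obtain ⟨b1, b2⟩ := hzs j
          constructor
          · nlinarith [mul_nonneg hl0 a1, mul_nonneg (sub_nonneg.2 hl1) b1]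
          · nlinarith [mul_nonneg hl0 (sub_nonneg.2 a2),
              mul_nonneg (sub_nonneg.2 hl1) (sub_nonneg.2 b2)])
        (fun j => by
          have a1 := (hz j).1
          have b1 := (hzs j).1
          have c1 := hts j
          have hk := hcone_s j
          have hl2 := sub_nonneg.2 hl1
          generalize pstar j = p at *
          generalize xs j = X at *
          generalize ts j = T at *
          generalize zs j = Z at *
          generalize z j = w at *
          have hkey : p * X ≤ T + p ^ 2 * Z / 4 := by
            have h0 : 0 ≤ T + p ^ 2 * Z / 4 := by positivity
            refine abs_le_of_sq_le_sq' ?_ h0 |>.2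
            have h1 := mul_le_mul_of_nonneg_left hk (sq_nonneg p)
            nlinarith [sq_nonneg (T - p ^ 2 * Z / 4)]
          have e1 := mul_nonneg (mul_nonneg (mul_nonneg hl0 hl2) a1) (sub_nonneg.2 hkey)
          have e2 := mul_nonneg (mul_nonneg hl2 hl2) (sub_nonneg.2 hk)
          nlinarith [e1, e2])
      have eT : (1 / γ) * ∑ j, (ts j + l * (pstar j ^ 2 * z j / 4 - ts j)) +
          μ * ∑ j, (zs j + l * (z j - zs j)) = (1 / γ) * ∑ j, ts j + μ * ∑ j, zs j +
          l * ∑ j, ((1 / γ) * (pstar j ^ 2 * z j / 4 - ts j) + μ * (z j - zs j)) := by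
        simp only [Finset.mul_sum, ← Finset.sum_add_distrib]
        exact Finset.sum_congr rfl fun j _ => by ring
      simp only [zero_mul, add_zero]
      linarith)
    have eF : -∑ j, pstar j * (pstar j * z j / 2 - xs j) / γ +
        1 * ∑ j, ((1 / γ) * (pstar j ^ 2 * z j / 4 - ts j) + μ * (z j - zs j)) =
        ∑ j, (μ * z j + pstar j * x j / γ - (pstar j) ^ 2 * z j / (4 * γ)) -
        ∑ j, pstar j * (x j - xs j) / γ - ((1 / γ) * ∑ j, ts j + μ * ∑ j, zs j) := by
      simp only [one_mul, Finset.mul_sum, ← Finset.sum_add_distrib, ← Finset.sum_sub_distrib,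
        ← Finset.sum_neg_distrib]
      refine Finset.sum_congr rfl fun j _ => ?_
      field_simp
      ring
    rw [eF] at hnn
    linarith
  have hEq : D pstar = (ηCR : EReal) := le_antisymm (hweak pstar) hstrong
  refine ⟨hEq, le_antisymm (sSup_le ?_) (le_sSup ⟨pstar, hEq.symm⟩)⟩
  rintro w ⟨p, rfl⟩
  exact hweak p
end
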